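/- arXiv:2004.05923 — 8 statements merged into one kernel-verified Lean document; each statement's English description precedes it below -/
import Mathlib

section
/- For every positive integer n and every ε > 0, the open unit ball of the ℓ¹ norm, B₁ = {x ∈ ℝⁿ : ‖x‖₁ < 1}, can be covered by finitely many Euclidean balls of radius ε with centers in B₁, where the number of balls can be taken at most: 1 if ε ≥ 1; (2n)^(1/ε²) if 1/√n < ε < 1; and (1 + 2/ε)ⁿ if 0 < ε ≤ 1/√n. That is, there exists a finite set S ⊆ B₁ with cardinality at most the stated bound such that every x ∈ B₁ satisfies ‖x − y‖₂ ≤ ε for some y ∈ S. -/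
/-!
The Euclidean norm is at most the `ℓ¹` norm, so `{0}` works for `1 ≤ ε`.

For `1 / √n < ε < 1`, the net is obtained by a derandomised Maurey argument. With `k = ⌊1 / ε²⌋`,
it consists of the points `(k + 1)⁻¹ (v₁ + ⋯ + v_k)` with each `v_j` one of the `2n` vectors `± e_i`.
There are at most `(2n)^k ≤ (2n)^(1/ε²)` of them, and each has `ℓ¹` norm at most `k / (k + 1) < 1`.
Given `x` in the `ℓ¹` ball, the `v_j` are chosen greedily so that the residual
`r_j = (j + 1) x - (v₁ + ⋯ + v_j)` satisfies `‖r_j‖² ≤ j + 1`: if `v` maximises `⟪r + x, ·⟫` over the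
cross-polytope, then `⟪r + x, x⟫ ≤ ⟪r + x, v⟫`, whence `‖r + x - v‖² ≤ ‖r‖² + 1`. Thus `x` is within
`1 / √(k + 1) < ε` of the net. Averaging over `k + 1` terms, one of which is `0`, rather than over
`k` terms is what makes the exponent `1 / ε²` suffice without rounding it up.

For smaller `ε`, a maximal `ε`-separated subset of the `ℓ¹` ball is a net, and comparing the volume
of the disjoint balls of radius `ε / 2` around its points with that of the Euclidean ball of radius
`1 + ε / 2` bounds its cardinality by `(1 + 2 / ε)^n`.
-/

open scoped RealInnerProductSpace

lemma norm_le_l1 {n : ℕ} (x : EuclideanSpace ℝ (Fin n)) : ‖x‖ ≤ ∑ i, |x i| := by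
  have h0 : 0 ≤ ∑ i, |x i| := Finset.sum_nonneg fun i _ => abs_nonneg _
  refine le_of_sq_le_sq ?_ h0
  rw [EuclideanSpace.real_norm_sq_eq, sq (∑ i, |x i|), Finset.sum_mul]
  refine Finset.sum_le_sum fun i _ => ?_
  rw [← sq_abs, sq]
  exact mul_le_mul_of_nonneg_left
    (Finset.single_le_sum (f := fun i => |x i|) (fun i _ => abs_nonneg _) (Finset.mem_univ i))
    (abs_nonneg _)

/-- The vertices `± e_i` of the cross-polytope, the Boolean encoding the sign. -/
noncomputable def crossVertex {n : ℕ} (p : Fin n × Bool) : EuclideanSpace ℝ (Fin n) :=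
  EuclideanSpace.single p.1 (if p.2 then 1 else -1)

lemma norm_crossVertex {n : ℕ} (p : Fin n × Bool) : ‖crossVertex p‖ = 1 := by
  rcases p with ⟨i, b⟩
  cases b <;> simp [crossVertex]

lemma l1_crossVertex {n : ℕ} (p : Fin n × Bool) : ∑ i, |crossVertex p i| = 1 := by
  rcases p with ⟨i, b⟩
  rw [Finset.sum_eq_single i]
  · cases b <;> simp [crossVertex]
  · intro j _ hj
    simp [crossVertex, hj]
  · simp

/-- A linear functional on the `ℓ¹` ball is dominated by its value at some vertex. -/
lemma exists_crossVertex {n : ℕ} (hn : 0 < n) (x z : EuclideanSpace ℝ (Fin n))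
    (hx : ∑ i, |x i| < 1) : ∃ p : Fin n × Bool, ⟪z, x⟫ ≤ ⟪z, crossVertex p⟫ := by
  have : Nonempty (Fin n) := ⟨⟨0, hn⟩⟩
  obtain ⟨i, hi⟩ := Finite.exists_max fun i => |z i|
  have h1 : ⟪z, x⟫ ≤ |z i| := by
    calc ⟪z, x⟫ = ∑ j, z j * x j := by
          simp [PiLp.inner_apply, mul_comm]
      _ ≤ ∑ j, |z i| * |x j| := by
          refine Finset.sum_le_sum fun j _ => (le_abs_self _).trans ?_
          rw [abs_mul]
          exact mul_le_mul_of_nonneg_right (hi j) (abs_nonneg _)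
      _ = |z i| * ∑ j, |x j| := by rw [Finset.mul_sum]
      _ ≤ |z i| := mul_le_of_le_one_right (abs_nonneg _) hx.le
  rcases abs_cases (z i) with h | h
  · refine ⟨(i, true), h1.trans (le_of_eq ?_)⟩
    simp [crossVertex, EuclideanSpace.inner_single_right, h.1]
  · refine ⟨(i, false), h1.trans (le_of_eq ?_)⟩
    simp [crossVertex, EuclideanSpace.inner_single_right, h.1]

/-- Greedy choice of vertices keeping the squared residual at most the number of terms. The `0`-th
term is the zero vector, which accounts for the factor `k + 1` in front of `x`. -/
lemma exists_greedy {n : ℕ} (hn : 0 < n) (x : EuclideanSpace ℝ (Fin n))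
    (hx : ∑ i, |x i| < 1) (k : ℕ) : ∃ p : Fin k → Fin n × Bool,
      ‖((k : ℝ) + 1) • x - ∑ j, crossVertex (p j)‖ ^ 2 ≤ (k : ℝ) + 1 := by
  induction k with
  | zero =>
    refine ⟨Fin.elim0, ?_⟩
    have h := (norm_le_l1 x).trans hx.le
    simpa using pow_le_one₀ (n := 2) (norm_nonneg x) h
  | succ k ih =>
    obtain ⟨p, hp⟩ := ih
    set r := ((k : ℝ) + 1) • x - ∑ j, crossVertex (p j) with hr
    obtain ⟨q, hq⟩ := exists_crossVertex hn x (r + x) hx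
    refine ⟨Fin.cons q p, ?_⟩
    have e : (((k + 1 : ℕ) : ℝ) + 1) • x
        - ∑ j, crossVertex ((Fin.cons q p : Fin (k + 1) → Fin n × Bool) j)
        = (r + x) - crossVertex q := by
      rw [Fin.sum_univ_succ, hr]
      simp only [Fin.cons_zero, Fin.cons_succ]
      push_cast
      module
    rw [e, norm_sub_sq_real, norm_crossVertex, norm_add_sq_real]
    rw [inner_add_left, real_inner_self_eq_norm_sq] at hq
    push_cast
    nlinarith [sq_nonneg ‖x‖]

/-- The sparse net: for every `k`, at most `(2n)^k` points give a `1 / √(k + 1)`-net. -/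
lemma exists_sparse_net {n : ℕ} (hn : 0 < n) (k : ℕ) :
    ∃ S : Finset (EuclideanSpace ℝ (Fin n)),
      (∀ y ∈ S, (∑ i, |y i|) < 1) ∧ S.card ≤ (2 * n) ^ k ∧
      ∀ x : EuclideanSpace ℝ (Fin n), (∑ i, |x i|) < 1 →
        ∃ y ∈ S, ‖x - y‖ ^ 2 ≤ 1 / ((k : ℝ) + 1) := by
  classical
  have hk : (0 : ℝ) < (k : ℝ) + 1 := by positivity
  refine ⟨Finset.univ.image fun p : Fin k → Fin n × Bool =>
    ((k : ℝ) + 1)⁻¹ • ∑ j, crossVertex (p j), ?_, ?_, ?_⟩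
  · intro y hy
    obtain ⟨p, -, rfl⟩ := Finset.mem_image.1 hy
    calc ∑ i, |(((k : ℝ) + 1)⁻¹ • ∑ j, crossVertex (p j)) i|
        ≤ ∑ i, ((k : ℝ) + 1)⁻¹ * ∑ j, |crossVertex (p j) i| := by
          refine Finset.sum_le_sum fun i _ => ?_
          rw [PiLp.smul_apply, smul_eq_mul, abs_mul, abs_of_pos (inv_pos.2 hk)]
          refine mul_le_mul_of_nonneg_left ?_ (inv_pos.2 hk).le
          rw [WithLp.ofLp_sum, Finset.sum_apply]
          exact Finset.abs_sum_le_sum_abs _ _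
      _ = ((k : ℝ) + 1)⁻¹ * k := by
          rw [← Finset.mul_sum, Finset.sum_comm]
          simp [l1_crossVertex]
      _ < 1 := by
          rw [inv_mul_lt_iff₀ hk]
          linarith
  · refine Finset.card_image_le.trans (le_of_eq ?_)
    simp [mul_comm]
  · intro x hx
    obtain ⟨p, hp⟩ := exists_greedy hn x hx k
    refine ⟨_, Finset.mem_image_of_mem _ (Finset.mem_univ p), ?_⟩
    have e : x - ((k : ℝ) + 1)⁻¹ • ∑ j, crossVertex (p j)
        = ((k : ℝ) + 1)⁻¹ • (((k : ℝ) + 1) • x - ∑ j, crossVertex (p j)) := by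
      rw [smul_sub, smul_smul, inv_mul_cancel₀ hk.ne', one_smul]
    rw [e, norm_smul, mul_pow, Real.norm_eq_abs, sq_abs]
    calc (((k : ℝ) + 1)⁻¹) ^ 2 * _ ≤ (((k : ℝ) + 1)⁻¹) ^ 2 * ((k : ℝ) + 1) :=
          mul_le_mul_of_nonneg_left hp (by positivity)
      _ = 1 / ((k : ℝ) + 1) := by field_simp

open MeasureTheory Metric Module in
/-- Volume bound for the size of an `ε`-separated subset of the Euclidean unit ball. -/
lemma card_le_of_sep {n : ℕ} {ε : ℝ} (hε : 0 < ε)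
    (s : Finset (EuclideanSpace ℝ (Fin n))) (hs : ∀ c ∈ s, ‖c‖ ≤ 1)
    (h : ∀ c ∈ s, ∀ d ∈ s, c ≠ d → ε ≤ ‖c - d‖) : (s.card : ℝ) ≤ (1 + 2 / ε) ^ n := by
  let μ : Measure (EuclideanSpace ℝ (Fin n)) := volume
  have hδ : 0 < ε / 2 := by positivity
  have hρ : 0 < 1 + ε / 2 := by positivity
  have D : Set.Pairwise (s : Set (EuclideanSpace ℝ (Fin n)))
      (Function.onFun Disjoint fun c => ball c (ε / 2)) := by
    rintro c hc d hd hcd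
    apply ball_disjoint_ball
    rw [dist_eq_norm, add_halves]
    exact h c hc d hd hcd
  have hsub : (⋃ c ∈ s, ball c (ε / 2)) ⊆ ball 0 (1 + ε / 2) := by
    refine Set.iUnion₂_subset fun c hc => ball_subset_ball' ?_
    rw [dist_zero_right]
    linarith [hs c hc]
  have I : (s.card : ENNReal) * ENNReal.ofReal ((ε / 2) ^ n) * μ (ball 0 1) ≤
      ENNReal.ofReal ((1 + ε / 2) ^ n) * μ (ball 0 1) := by
    have := measure_mono (μ := μ) hsub
    rw [measure_biUnion_finset D fun c _ => measurableSet_ball] at this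
    simpa only [μ.addHaar_ball_of_pos _ hδ, μ.addHaar_ball_of_pos _ hρ, finrank_euclideanSpace_fin,
      Finset.sum_const, nsmul_eq_mul, mul_assoc] using this
  have J := (ENNReal.mul_le_mul_iff_left (measure_ball_pos μ _ zero_lt_one).ne'
    measure_ball_lt_top.ne).1 I
  have K := ENNReal.toReal_le_of_le_ofReal (pow_nonneg hρ.le _) J
  rw [ENNReal.toReal_mul, ENNReal.toReal_natCast, ENNReal.toReal_ofReal (by positivity),
    ← le_div_iff₀ (by positivity), ← div_pow] at K
  have e : (1 + ε / 2) / (ε / 2) = 1 + 2 / ε := by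
    field_simp
    ring
  rwa [e] at K

lemma exists_volume_net {n : ℕ} {ε : ℝ} (hε : 0 < ε) :
    ∃ S : Finset (EuclideanSpace ℝ (Fin n)),
      (∀ y ∈ S, (∑ i, |y i|) < 1) ∧ (S.card : ℝ) ≤ (1 + 2 / ε) ^ n ∧
      ∀ x : EuclideanSpace ℝ (Fin n), (∑ i, |x i|) < 1 → ∃ y ∈ S, ‖x - y‖ ≤ ε := by
  classical
  have bound : ∀ S : Finset (EuclideanSpace ℝ (Fin n)), (∀ y ∈ S, (∑ i, |y i|) < 1) →
      (∀ c ∈ S, ∀ d ∈ S, c ≠ d → ε ≤ ‖c - d‖) → (S.card : ℝ) ≤ (1 + 2 / ε) ^ n :=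
    fun S h1 h2 => card_le_of_sep hε S (fun c hc => (norm_le_l1 c).trans (h1 c hc).le) h2
  by_contra! hcon
  -- If no separated set were a net, separated sets could be enlarged indefinitely.
  have grow : ∀ m : ℕ, ∃ S : Finset (EuclideanSpace ℝ (Fin n)), S.card = m ∧
      (∀ y ∈ S, (∑ i, |y i|) < 1) ∧ ∀ c ∈ S, ∀ d ∈ S, c ≠ d → ε ≤ ‖c - d‖ := by
    intro m
    induction m with
    | zero => exact ⟨∅, by simp⟩
    | succ m ih =>
      obtain ⟨S, hm, h1, h2⟩ := ih
      obtain ⟨x, hx, hxS⟩ := hcon S h1 (bound S h1 h2)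
      have hxn : x ∉ S := fun hmem => by
        have := hxS x hmem
        rw [sub_self, norm_zero] at this
        linarith
      refine ⟨insert x S, by rw [Finset.card_insert_of_notMem hxn, hm], ?_, ?_⟩
      · intro y hy
        rcases Finset.mem_insert.1 hy with rfl | hy
        exacts [hx, h1 y hy]
      · intro c hc d hd hcd
        rcases Finset.mem_insert.1 hc with rfl | hc' <;>
          rcases Finset.mem_insert.1 hd with rfl | hd'
        · exact absurd rfl hcd
        · exact (hxS d hd').le
        · rw [norm_sub_rev]
          exact (hxS c hc').le
        · exact h2 c hc' d hd' hcd
  obtain ⟨m, hm⟩ := exists_nat_gt ((1 + 2 / ε) ^ n)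
  obtain ⟨S, hS, h1, h2⟩ := grow m
  have := bound S h1 h2
  rw [hS] at this
  linarith

/-- Covering number bound for the open unit ball of the ℓ¹ norm in ℝⁿ
by Euclidean balls of radius ε with centers in the ℓ¹ ball. -/
theorem l1_ball_covering (n : ℕ) (hn : 0 < n) (ε : ℝ) (hε : 0 < ε) :
    ∃ S : Finset (EuclideanSpace ℝ (Fin n)),
      (∀ y ∈ S, (∑ i, |y i|) < 1) ∧
      (S.card : ℝ) ≤
        (if 1 ≤ ε then 1
         else if 1 / Real.sqrt n < ε then (2 * n : ℝ) ^ ((1 : ℝ) / ε ^ 2)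
         else (1 + 2 / ε) ^ n) ∧
      ∀ x : EuclideanSpace ℝ (Fin n), (∑ i, |x i|) < 1 →
        ∃ y ∈ S, ‖x - y‖ ≤ ε := by
  split_ifs with h1 h2
  · refine ⟨{0}, by simp, by simp, fun x hx => ⟨0, by simp, ?_⟩⟩
    rw [sub_zero]
    exact (norm_le_l1 x).trans (hx.le.trans h1)
  · obtain ⟨S, hS1, hS2, hS3⟩ := exists_sparse_net hn ⌊1 / ε ^ 2⌋₊
    refine ⟨S, hS1, ?_, fun x hx => ?_⟩
    · have h2n : (1 : ℝ) ≤ 2 * n := by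
        have : (1 : ℝ) ≤ n := by exact_mod_cast hn
        linarith
      calc (S.card : ℝ) ≤ (2 * n : ℝ) ^ ⌊1 / ε ^ 2⌋₊ := by exact_mod_cast hS2
        _ = (2 * n : ℝ) ^ ((⌊1 / ε ^ 2⌋₊ : ℕ) : ℝ) := (Real.rpow_natCast _ _).symm
        _ ≤ (2 * n : ℝ) ^ ((1 : ℝ) / ε ^ 2) :=
          Real.rpow_le_rpow_of_exponent_le h2n (Nat.floor_le (by positivity))
    · obtain ⟨y, hy, hxy⟩ := hS3 x hx
      refine ⟨y, hy, le_of_sq_le_sq (hxy.trans ?_) hε.le⟩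
      have hlt := (Nat.lt_floor_add_one (1 / ε ^ 2)).le
      rwa [one_div_le (by positivity) (by positivity)]
  · exact exists_volume_net hε
end

section
/- For every positive integer n, every positive integer m, and every x ∈ ℝⁿ, there exists y ∈ ℝⁿ such that m·yᵢ ∈ ℤ for every coordinate i, |xᵢ − yᵢ| ≤ min(1/m, |xᵢ|) for every i (hence ‖y‖₁ ≤ ‖x‖₁), and ‖x − y‖₂² ≤ ‖x‖₁ / m. -/
/-!
Round every coordinate towards zero to a multiple of `1/m`. The error in a coordinate `t` is then
at most `1/m` and at most `|t|`, so its square is at most `|t|/m`; summing over the coordinates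
bounds the squared Euclidean error by `‖x‖₁/m`. Rounding towards zero does not increase
absolute values, whence the bound on the `ℓ¹` norm.
-/

theorem exists_round_toward_zero (M : ℝ) (hM : 0 < M) (t : ℝ) :
    ∃ s : ℝ, (∃ k : ℤ, M * s = k) ∧ |t - s| ≤ 1 / M ∧ |t - s| ≤ |t| ∧ |s| ≤ |t| := by
  wlog ht : 0 ≤ t generalizing t with H
  · obtain ⟨s, ⟨k, hk⟩, h1, h2, h3⟩ := H (-t) (by linarith)
    have e : |t - -s| = |-t - s| := by rw [← abs_neg]; congr 1; ring
    refine ⟨-s, ⟨-k, by push_cast; linarith⟩, ?_, ?_, ?_⟩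
    · rwa [e]
    · rwa [e, ← abs_neg t]
    · rwa [abs_neg, ← abs_neg t]
  · have hf := Int.floor_le (M * t)
    have hl := Int.lt_floor_add_one (M * t)
    have h0 : (0 : ℝ) ≤ (⌊M * t⌋ : ℝ) := by
      exact_mod_cast Int.floor_nonneg.2 (mul_nonneg hM.le ht)
    have hs0 : 0 ≤ (⌊M * t⌋ : ℝ) / M := by positivity
    have hs1 : (⌊M * t⌋ : ℝ) / M ≤ t := by rw [div_le_iff₀ hM]; linarith
    have hs2 : t ≤ (⌊M * t⌋ : ℝ) / M + 1 / M := by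
      rw [← add_div, le_div_iff₀ hM]; linarith
    refine ⟨(⌊M * t⌋ : ℝ) / M, ⟨⌊M * t⌋, by field_simp⟩, ?_, ?_, ?_⟩
    · rw [abs_of_nonneg (by linarith)]; linarith
    · rw [abs_of_nonneg (by linarith), abs_of_nonneg ht]; linarith
    · rwa [abs_of_nonneg hs0, abs_of_nonneg ht]



/-- Lattice approximation lemma: any point of ℝⁿ can be approximated by a point of
the lattice (1/m)·ℤⁿ, coordinatewise within min(1/m, |xᵢ|), with squared Euclidean
error at most ‖x‖₁/m. -/
theorem lattice_approx (n : ℕ) (hn : 0 < n) (m : ℕ) (hm : 0 < m)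
    (x : EuclideanSpace ℝ (Fin n)) :
    ∃ y : EuclideanSpace ℝ (Fin n),
      (∀ i, ∃ k : ℤ, (m : ℝ) * y i = (k : ℝ)) ∧
      (∀ i, |x i - y i| ≤ min (1 / (m : ℝ)) |x i|) ∧
      (∑ i, |y i|) ≤ (∑ i, |x i|) ∧
      ‖x - y‖ ^ 2 ≤ (∑ i, |x i|) / (m : ℝ) := by
  have hM : (0 : ℝ) < m := by exact_mod_cast hm
  choose s hk h1 h2 h3 using fun i => exists_round_toward_zero (m : ℝ) hM (x i)
  refine ⟨WithLp.toLp 2 s, hk, fun i => le_min (h1 i) (h2 i),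
    Finset.sum_le_sum fun i _ => h3 i, ?_⟩
  rw [EuclideanSpace.norm_sq_eq, Finset.sum_div]
  refine Finset.sum_le_sum fun i _ => ?_
  calc ‖(x - WithLp.toLp 2 s) i‖ ^ 2 = |x i - s i| * |x i - s i| := by
        rw [sq]; rfl
    _ ≤ |x i| * (1 / m) := mul_le_mul (h2 i) (h1 i) (abs_nonneg _) (abs_nonneg _)
    _ = |x i| / m := by ring
end

section
/- For all natural numbers n and r, the number of integer vectors k ∈ ℤⁿ with ∑ᵢ |kᵢ| ≤ r equals ∑_{j=0}^{r} 2^j · C(n, j) · C(r, j), where C denotes the binomial coefficient (terms with j > n vanish since C(n, j) = 0). -/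
/-!
Both sides satisfy the same recursion in `n`. Grouping the vectors in the `ℓ¹`-ball of radius `r`
in `ℤⁿ⁺¹` by their first coordinate `a`, the remaining coordinates range over the ball of radius
`r - |a|` in `ℤⁿ`; each radius `s < r` arises from two values of `a`, and `s = r` from `a = 0` only.
So the counts satisfy `B (n + 1) r = B n r + 2 * ∑ s < r, B n s`
(`card_ball_recursion_sum` carries out the regrouping). The right-hand side satisfies the same
recursion (`ballCount_succ`) by Pascal's rule in `n` and the hockey-stick identity in `r`.
-/

/-- The closed form `∑ⱼ 2ʲ C(n, j) C(r, j)` for the number of integer points in the `ℓ¹`-ball. -/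
def ballCount (n r : ℕ) : ℕ :=
  ∑ j ∈ Finset.range (r + 1), 2 ^ j * n.choose j * r.choose j

/-- Terms with `j > r` vanish, so the sum may be extended to any longer range. -/
lemma ballCount_eq_of_lt {n r N : ℕ} (h : r < N) :
    ballCount n r = ∑ j ∈ Finset.range N, 2 ^ j * n.choose j * r.choose j := by
  refine Finset.sum_subset (Finset.range_subset_range.2 h) fun j _ hj => ?_
  have hj' : r < j := by simpa using hj
  rw [Nat.choose_eq_zero_of_lt hj', mul_zero]

lemma choose_succ_eq_sum_range (r j : ℕ) :
    r.choose (j + 1) = ∑ s ∈ Finset.range r, s.choose j := by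
  induction r with
  | zero => simp
  | succ r ih => rw [Finset.sum_range_succ, ← ih, Nat.choose_succ_succ', add_comm]

lemma ballCount_succ (n r : ℕ) :
    ballCount (n + 1) r = ballCount n r + 2 * ∑ s ∈ Finset.range r, ballCount n s := by
  have key : ∑ s ∈ Finset.range r, ballCount n s
      = ∑ j ∈ Finset.range r, 2 ^ j * n.choose j * r.choose (j + 1) := by
    rw [Finset.sum_congr rfl fun s hs => ballCount_eq_of_lt (Finset.mem_range.1 hs),
      Finset.sum_comm]
    simp_rw [← Finset.mul_sum, ← choose_succ_eq_sum_range]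
  rw [key, ballCount, ballCount, Finset.sum_range_succ', Finset.sum_range_succ', Finset.mul_sum,
    add_right_comm, ← Finset.sum_add_distrib]
  simp only [Nat.choose_zero_right, Nat.choose_succ_succ' n]
  congr 1
  exact Finset.sum_congr rfl fun j _ => by ring

lemma sum_Icc_natAbs (h : ℕ → ℕ) (r : ℕ) :
    ∑ a ∈ Finset.Icc (-(r : ℤ)) r, h a.natAbs = h 0 + 2 * ∑ i ∈ Finset.range r, h (i + 1) := by
  induction r with
  | zero => simp
  | succ r ih =>
    have hI : Finset.Icc (-((r + 1 : ℕ) : ℤ)) ((r + 1 : ℕ) : ℤ)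
        = insert (-((r + 1 : ℕ) : ℤ)) (insert ((r + 1 : ℕ) : ℤ) (Finset.Icc (-(r : ℤ)) r)) := by
      ext a
      simp only [Finset.mem_Icc, Finset.mem_insert]
      omega
    rw [hI, Finset.sum_insert, Finset.sum_insert, ih, Finset.sum_range_succ, Int.natAbs_neg,
      Int.natAbs_natCast]
    · ring
    · simp only [Finset.mem_Icc]
      omega
    · simp only [Finset.mem_Icc, Finset.mem_insert]
      omega

/-- Summing over the first coordinate `a` a function of the remaining radius `r - |a|`. -/
lemma card_ball_recursion_sum (g : ℕ → ℕ) (r : ℕ) :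
    ∑ a ∈ Finset.Icc (-(r : ℤ)) r, g (r - a.natAbs) = g r + 2 * ∑ s ∈ Finset.range r, g s := by
  rw [sum_Icc_natAbs (fun i => g (r - i)) r, ← Finset.sum_range_reflect g r]
  simp only [Nat.sub_zero, Nat.sub_sub, add_comm 1]

/-- The ball as an explicit `Finset` of the expected cardinality. Carrying the finset through the
induction on `n` gives finiteness of the ball at the same time as its size. -/
lemma exists_finset_ball (n r : ℕ) :
    ∃ F : Finset (Fin n → ℤ), (∀ k, k ∈ F ↔ ∑ i, |k i| ≤ (r : ℤ)) ∧ F.card = ballCount n r := by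
  induction n generalizing r with
  | zero =>
    refine ⟨Finset.univ, fun k => ⟨fun _ => by simp, fun _ => Finset.mem_univ k⟩, ?_⟩
    simp [ballCount, Finset.sum_range_succ']
  | succ n ih =>
    choose F hF hcard using ih
    refine ⟨((Finset.Icc (-(r : ℤ)) r).sigma fun a => F (r - a.natAbs)).map
      ((Equiv.sigmaEquivProd ℤ (Fin n → ℤ)).trans
        (Fin.consEquiv fun _ : Fin (n + 1) => ℤ)).toEmbedding, fun k => ?_, ?_⟩
    · rw [Finset.mem_map_equiv, Finset.mem_sigma, hF, Fin.sum_univ_succ, Finset.mem_Icc]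
      change (-(r : ℤ) ≤ k 0 ∧ k 0 ≤ r) ∧ ∑ i : Fin n, |k i.succ| ≤ ((r - (k 0).natAbs : ℕ) : ℤ)
        ↔ _
      have hpos : 0 ≤ ∑ i : Fin n, |k i.succ| := Finset.sum_nonneg fun _ _ => abs_nonneg _
      rw [Int.abs_eq_natAbs (k 0)]
      omega
    · rw [Finset.card_map, Finset.card_sigma]
      simp only [hcard]
      rw [card_ball_recursion_sum (ballCount n), ballCount_succ]

/-- The number of integer vectors k ∈ ℤⁿ with ∑ᵢ |kᵢ| ≤ r equals
∑_{j=0}^{r} 2^j · C(n, j) · C(r, j). -/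
theorem card_integer_l1_ball (n r : ℕ) :
    {k : Fin n → ℤ | (∑ i, |k i|) ≤ (r : ℤ)}.ncard
      = ∑ j ∈ Finset.range (r + 1), 2 ^ j * n.choose j * r.choose j := by
  obtain ⟨F, hF, hcard⟩ := exists_finset_ball n r
  have hset : {k : Fin n → ℤ | (∑ i, |k i|) ≤ (r : ℤ)} = F := by
    ext k
    simp [hF]
  rw [hset, Set.ncard_coe_finset, hcard, ballCount]
end

section
/- For all natural numbers m and n with 3 ≤ m ≤ n, one has ∑_{k=0}^{m−1} 2^k · C(n, k) · C(m−1, k) ≤ (2n)^(m−1), where C denotes the binomial coefficient. -/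
/-!
Put `S p = ∑_{k ≤ p} 2^k C(n,k) C(p,k)`, so that the claim reads `S p ≤ (2n)^p` for `p = m - 1 ≥ 2`.
It follows by induction on `p` from `S (p+1) ≤ 2n · S p`, valid for `p, n ≥ 1`; the base case is
`S 2 = 2n² + 2n + 1 ≤ 4n²`.

For the inductive step, write `S p = A + 1` with `A` the sum over `k ≥ 1`. Pascal's rule applied to
`C(p+1,k)` gives `S (p+1) = S p + ∑_k 2^(k+1) C(n,k+1) C(p,k)`. In the last sum the term `k = 0`
is `2n`, and the rest is at most `(n-1) A`, because `2 C(n,k+1) ≤ (n-1) C(n,k)` for `k ≥ 1`.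
Hence `S (p+1) ≤ 1 + 2n + nA ≤ 2n (A + 1)`, as `nA ≥ 1`.
-/

lemma two_mul_choose_add_choose_le (n k : ℕ) :
    2 * n.choose (k + 2) + n.choose (k + 1) ≤ n * n.choose (k + 1) := by
  rcases Nat.lt_or_ge n (k + 1) with h | h
  · simp [Nat.choose_eq_zero_of_lt h, Nat.choose_eq_zero_of_lt (show n < k + 2 by omega)]
  · have h1 := Nat.choose_succ_right_eq n (k + 1)
    obtain ⟨d, rfl⟩ := Nat.exists_eq_add_of_le h
    rw [show k + 1 + d - (k + 1) = d by omega] at h1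
    have h2 : 2 * (k + 1 + d).choose (k + 2) ≤ (k + 1 + d).choose (k + 1) * d := by
      rw [← h1]
      nlinarith [Nat.zero_le (k * (k + 1 + d).choose (k + 2))]
    nlinarith [Nat.zero_le (k * (k + 1 + d).choose (k + 1))]

/-- The inductive step `S (p+1) ≤ 2n · S p`, where `S p = ∑_{k ≤ p} 2^k C(n,k) C(p,k)`. -/
lemma sum_choose_succ_le (n p : ℕ) (hn : 1 ≤ n) (hp : 1 ≤ p) :
    ∑ k ∈ Finset.range (p + 2), 2 ^ k * n.choose k * (p + 1).choose k ≤
      2 * n * ∑ k ∈ Finset.range (p + 1), 2 ^ k * n.choose k * p.choose k := by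
  have hpascal : ∑ k ∈ Finset.range (p + 2), 2 ^ k * n.choose k * (p + 1).choose k =
      ∑ k ∈ Finset.range (p + 1), 2 ^ (k + 1) * n.choose (k + 1) * p.choose k +
      ∑ k ∈ Finset.range (p + 1), 2 ^ (k + 1) * n.choose (k + 1) * p.choose (k + 1) + 1 := by
    rw [Finset.sum_range_succ', ← Finset.sum_add_distrib]
    simp [Nat.choose_succ_succ p, mul_add]
  rw [hpascal, Finset.sum_range_succ' (fun k => 2 ^ k * n.choose k * p.choose k),
    Finset.sum_range_succ' (fun k => 2 ^ (k + 1) * n.choose (k + 1) * p.choose k),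
    Finset.sum_range_succ (fun k => 2 ^ (k + 1) * n.choose (k + 1) * p.choose (k + 1))]
  have hB : ∑ k ∈ Finset.range p, 2 ^ (k + 1 + 1) * n.choose (k + 1 + 1) * p.choose (k + 1) +
      ∑ k ∈ Finset.range p, 2 ^ (k + 1) * n.choose (k + 1) * p.choose (k + 1) ≤
      n * ∑ k ∈ Finset.range p, 2 ^ (k + 1) * n.choose (k + 1) * p.choose (k + 1) := by
    rw [← Finset.sum_add_distrib, Finset.mul_sum]
    refine Finset.sum_le_sum fun k _ => ?_
    have := Nat.mul_le_mul_left (2 ^ (k + 1) * p.choose (k + 1))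
      (two_mul_choose_add_choose_le n k)
    calc _ = 2 ^ (k + 1) * p.choose (k + 1) * (2 * n.choose (k + 2) + n.choose (k + 1)) := by ring
      _ ≤ _ := this
      _ = _ := by ring
  have hA : 1 ≤ ∑ k ∈ Finset.range p, 2 ^ (k + 1) * n.choose (k + 1) * p.choose (k + 1) := by
    refine le_trans ?_ (Finset.single_le_sum
      (f := fun k => 2 ^ (k + 1) * n.choose (k + 1) * p.choose (k + 1))
      (fun _ _ => Nat.zero_le _) (Finset.mem_range.mpr hp))
    simp only [zero_add, Nat.choose_one_right, pow_one]
    nlinarith [Nat.mul_le_mul hn hp]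
  simp only [Nat.choose_succ_self, Nat.choose_zero_right, Nat.choose_one_right, zero_add, pow_zero,
    pow_one, mul_one, mul_zero, add_zero]
  nlinarith [Nat.mul_le_mul hn hA]

/-- For 3 ≤ m ≤ n, ∑_{k=0}^{m−1} 2^k · C(n, k) · C(m−1, k) ≤ (2n)^(m−1). -/
theorem sum_le_two_n_pow (m n : ℕ) (h3 : 3 ≤ m) (hmn : m ≤ n) :
    ∑ k ∈ Finset.range m, 2 ^ k * n.choose k * (m - 1).choose k ≤ (2 * n) ^ (m - 1) := by
  have hn : 3 ≤ n := h3.trans hmn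
  clear hmn
  induction m, h3 using Nat.le_induction with
  | base =>
    have h := two_mul_choose_add_choose_le n 0
    simp only [zero_add, Nat.choose_one_right] at h
    simp [Finset.sum_range_succ]
    nlinarith
  | succ m hm ih =>
    obtain ⟨p, rfl⟩ : ∃ p, m = p + 1 := ⟨m - 1, by omega⟩
    simp only [Nat.add_sub_cancel] at ih ⊢
    refine (sum_choose_succ_le n p (by omega) (by omega)).trans ?_
    rw [pow_succ' (2 * n) p]
    exact Nat.mul_le_mul_left _ ih
end

section
/- Assume there are constants C > 0 and M > 0 such that ‖Φ(x)‖ ≥ C·‖x‖₂ for all x and ‖Φ(x) − Φ(y)‖ ≤ M·C·‖x − y‖₂ for all x, y. Then for every r > 0 and every x with ‖x − x₀‖₁ < r, one has K(x, x₀)/K(x₀, x₀) ≥ 1 − M·C·r/√(K(x₀, x₀)). -/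
/-!
The squared feature norm is `‖Φ x₀‖² = K x₀ x₀`, and by Cauchy–Schwarz
`K x₀ x₀ - K x x₀ = ⟪Φ x₀ - Φ x, Φ x₀⟫ ≤ ‖Φ x - Φ x₀‖ ‖Φ x₀‖`. The Lipschitz bound and
`‖x - x₀‖₂ ≤ ‖x - x₀‖₁ < r` bound the first factor by `M * C * r`; dividing by `‖Φ x₀‖²` gives
the claim.
-/

open scoped RealInnerProductSpace

/-- The Euclidean norm is at most the `ℓ¹` norm. -/
lemma euclidean_norm_le_sum_abs {n : ℕ} (v : EuclideanSpace ℝ (Fin n)) :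
    ‖v‖ ≤ ∑ i, |v i| := by
  rw [EuclideanSpace.norm_eq]
  refine Real.sqrt_le_iff.mpr ⟨Finset.sum_nonneg fun i _ => abs_nonneg _, ?_⟩
  exact Finset.sum_sq_le_sq_sum_of_nonneg fun i _ => abs_nonneg _

/-- Lower bound on K(x,x₀)/K(x₀,x₀) for x in an ℓ¹ ball around x₀. -/
theorem kernel_ratio_lower_bound {n : ℕ} (hn : 0 < n)
    {H : Type*} [NormedAddCommGroup H] [InnerProductSpace ℝ H]
    (Φ : EuclideanSpace ℝ (Fin n) → H)
    (K : EuclideanSpace ℝ (Fin n) → EuclideanSpace ℝ (Fin n) → ℝ)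
    (hK : ∀ x y, K x y = ⟪Φ x, Φ y⟫)
    (x₀ : EuclideanSpace ℝ (Fin n)) (hx₀ : 0 < K x₀ x₀)
    (C M : ℝ) (hC : 0 < C) (hM : 0 < M)
    (hlow : ∀ x, C * ‖x‖ ≤ ‖Φ x‖)
    (hlip : ∀ x y, ‖Φ x - Φ y‖ ≤ M * C * ‖x - y‖) :
    ∀ r > (0 : ℝ), ∀ x : EuclideanSpace ℝ (Fin n), (∑ i, |x i - x₀ i|) < r →
      1 - M * C * r / Real.sqrt (K x₀ x₀) ≤ K x x₀ / K x₀ x₀ := by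
  intro r _ x hx
  have hsq : K x₀ x₀ = ‖Φ x₀‖ ^ 2 := by rw [hK, real_inner_self_eq_norm_sq]
  have hpos : 0 < ‖Φ x₀‖ := by
    rw [hsq] at hx₀
    exact (norm_nonneg _).lt_of_ne' (sq_pos_iff.mp hx₀)
  have hdist : ‖x - x₀‖ ≤ r :=
    (euclidean_norm_le_sum_abs (x - x₀)).trans (by simpa using hx.le)
  have hΦ : ‖Φ x₀ - Φ x‖ ≤ M * C * r := by
    rw [norm_sub_rev]
    exact (hlip x x₀).trans (by gcongr)
  have hcs : ⟪Φ x₀ - Φ x, Φ x₀⟫ ≤ M * C * r * ‖Φ x₀‖ :=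
    (real_inner_le_norm _ _).trans (by gcongr)
  rw [inner_sub_left, ← hK, ← hK, hsq] at hcs
  rw [hsq, Real.sqrt_sq hpos.le, le_div_iff₀ (by positivity)]
  have h : (1 - M * C * r / ‖Φ x₀‖) * ‖Φ x₀‖ ^ 2 = ‖Φ x₀‖ ^ 2 - M * C * r * ‖Φ x₀‖ := by
    field_simp
  linarith
end

section
/- Let H be a real inner product space and let u, v ∈ H be nonzero. Then ‖u‖·‖v‖·Ψ(⟪u, v⟫/(‖u‖·‖v‖)) ≥ ⟪u, v⟫, the left-hand side is nonnegative, and for v = u the left-hand side equals ‖u‖². -/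
/-!
The whole statement rests on the inequality `θ cos θ ≤ sin θ` on `[0, π]`. Read at `θ = arccos t`
it says `t arccos t ≤ √(1 - t²)`, which is `t ≤ Ψ t`; read at `-t`, whose arccosine is
`π - arccos t`, it says `0 ≤ Ψ t`. The two bounds on the kernel follow on multiplying by
`‖u‖ ‖v‖`, and the diagonal value is `Ψ 1 = 1`.
-/

open scoped RealInnerProductSpace

theorem mul_cos_le_sin_of_mem {x : ℝ} (h0 : 0 ≤ x) (hx : x ≤ Real.pi) :
    x * Real.cos x ≤ Real.sin x := by
  rcases lt_or_ge x (Real.pi / 2) with h | h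
  · have hc : 0 < Real.cos x := Real.cos_pos_of_mem_Ioo ⟨by linarith, h⟩
    calc x * Real.cos x ≤ Real.tan x * Real.cos x :=
          mul_le_mul_of_nonneg_right (Real.le_tan h0 h) hc.le
      _ = Real.sin x := Real.tan_mul_cos hc.ne'
  · have hc : Real.cos x ≤ 0 :=
      Real.cos_nonpos_of_pi_div_two_le_of_le h (by linarith [Real.pi_pos])
    linarith [mul_nonpos_of_nonneg_of_nonpos h0 hc, Real.sin_nonneg_of_nonneg_of_le_pi h0 hx]

theorem arccos_mul_le_sqrt {t : ℝ} (h1 : -1 ≤ t) (h2 : t ≤ 1) :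
    Real.arccos t * t ≤ Real.sqrt (1 - t ^ 2) := by
  have h := mul_cos_le_sin_of_mem (Real.arccos_nonneg t) (Real.arccos_le_pi t)
  rwa [Real.cos_arccos h1 h2, Real.sin_arccos] at h

/-- For nonzero u, v in a real inner product space,
‖u‖·‖v‖·Ψ(⟪u,v⟫/(‖u‖·‖v‖)) ≥ ⟪u,v⟫, the left-hand side is nonnegative,
and for v = u it equals ‖u‖². -/
theorem Psi_kernel_properties {H : Type*} [NormedAddCommGroup H] [InnerProductSpace ℝ H]
    (Ψ : ℝ → ℝ)
    (hΨ : ∀ t, Ψ t = (Real.sqrt (1 - t ^ 2) + (Real.pi - Real.arccos t) * t) / Real.pi)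
    (u v : H) (hu : u ≠ 0) (hv : v ≠ 0) :
    ⟪u, v⟫ ≤ ‖u‖ * ‖v‖ * Ψ (⟪u, v⟫ / (‖u‖ * ‖v‖)) ∧
    0 ≤ ‖u‖ * ‖v‖ * Ψ (⟪u, v⟫ / (‖u‖ * ‖v‖)) ∧
    ‖u‖ * ‖u‖ * Ψ (⟪u, u⟫ / (‖u‖ * ‖u‖)) = ‖u‖ ^ 2 := by
  have hpos : 0 < ‖u‖ * ‖v‖ := mul_pos (norm_pos_iff.mpr hu) (norm_pos_iff.mpr hv)
  obtain ⟨h1, h2⟩ := abs_le.mp (abs_real_inner_div_norm_mul_norm_le_one u v)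
  have ht : ‖u‖ * ‖v‖ * (⟪u, v⟫ / (‖u‖ * ‖v‖)) = ⟪u, v⟫ := mul_div_cancel₀ _ hpos.ne'
  set t := ⟪u, v⟫ / (‖u‖ * ‖v‖)
  refine ⟨?_, ?_, ?_⟩
  · have hle : t ≤ Ψ t := by
      rw [hΨ, le_div_iff₀ Real.pi_pos]
      linarith [arccos_mul_le_sqrt h1 h2]
    calc ⟪u, v⟫ = ‖u‖ * ‖v‖ * t := ht.symm
      _ ≤ ‖u‖ * ‖v‖ * Ψ t := mul_le_mul_of_nonneg_left hle hpos.le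
  · refine mul_nonneg hpos.le ?_
    rw [hΨ]
    have h := arccos_mul_le_sqrt (t := -t) (by linarith) (by linarith)
    rw [Real.arccos_neg, neg_sq] at h
    exact div_nonneg (by linarith) Real.pi_pos.le
  · have hone : ⟪u, u⟫ / (‖u‖ * ‖u‖) = 1 := by
      rw [real_inner_self_eq_norm_mul_norm]
      exact div_self (mul_self_ne_zero.mpr (norm_ne_zero_iff.mpr hu))
    have hΨ1 : Ψ 1 = 1 := by
      rw [hΨ]
      simp [Real.pi_ne_zero]
    rw [hone, hΨ1, mul_one, sq]
end

section
/- Let γ be the standard Gaussian measure on ℝ (mean 0, variance 1) and consider the product measure γ ⊗ γ on ℝ². Then for every ρ ∈ [−1, 1], ∫ max(0, x) · max(0, ρ·x + √(1 − ρ²)·y) d(γ ⊗ γ)(x, y) = Ψ(ρ)/2. -/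
/-!
Write `ρ = cos α` with `α = arccos ρ ∈ [0, π]`, so that `√(1 - ρ²) = sin α`. In polar coordinates
`ρ x + √(1 - ρ²) y = r cos (θ - α)`, and the integral against the planar Gaussian density
`exp (-r² / 2) / (2π)` splits into a product of

* the radial factor `∫ r³ exp (-r² / 2) dr = 2` (`radial_integral`), a value of the Gamma function;
* the angular factor `∫ (cos θ)⁺ (cos (θ - α))⁺ dθ = (sin α + (π - α) cos α) / 2`
  (`angular_integral`): both cosines are positive exactly for `α - π/2 < θ < π/2`, where
  the product has an elementary primitive.
-/

open MeasureTheory ProbabilityTheory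

lemma radial_integral :
    ∫ r in Set.Ioi (0 : ℝ), r ^ 3 * Real.exp (-r ^ 2 / 2) = 2 := by
  have h := integral_rpow_mul_exp_neg_mul_rpow (p := 2) (q := 3) (b := 1 / 2)
    (by norm_num) (by norm_num) (by norm_num)
  have h2 : Real.Gamma ((3 + 1) / 2) = 1 := by
    rw [show ((3 : ℝ) + 1) / 2 = 2 by norm_num, Real.Gamma_two]
  rw [h2, show (-(3 + 1) / 2 : ℝ) = ((-2 : ℤ) : ℝ) by norm_num, Real.rpow_intCast] at h
  norm_num at h
  refine Eq.trans ?_ h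
  refine setIntegral_congr_fun measurableSet_Ioi fun r _ => ?_
  ring_nf

/-- On `(-π, π)` the two cosines are simultaneously positive only between `α - π/2` and `π/2`. -/
lemma angular_indicator {α : ℝ} (h0 : 0 ≤ α) (h1 : α ≤ Real.pi) {θ : ℝ}
    (hθ : θ ∈ Set.Ioo (-Real.pi) Real.pi) :
    max 0 (Real.cos θ) * max 0 (Real.cos (θ - α)) =
      (Set.Ioc (α - Real.pi / 2) (Real.pi / 2)).indicator
        (fun t => Real.cos t * Real.cos (t - α)) θ := by
  obtain ⟨ha, hb⟩ := hθ
  by_cases hm : θ ∈ Set.Ioc (α - Real.pi / 2) (Real.pi / 2)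
  · rw [Set.indicator_of_mem hm]
    obtain ⟨hc, hd⟩ := hm
    rw [max_eq_right (Real.cos_nonneg_of_mem_Icc ⟨by linarith, by linarith⟩),
      max_eq_right (Real.cos_nonneg_of_mem_Icc ⟨by linarith, by linarith⟩)]
  · rw [Set.indicator_of_notMem hm]
    by_cases hd : Real.pi / 2 < θ
    · rw [max_eq_left (Real.cos_nonpos_of_pi_div_two_le_of_le hd.le (by linarith)), zero_mul]
    have hc : θ ≤ α - Real.pi / 2 := by
      by_contra hc
      exact hm ⟨not_le.1 hc, not_lt.1 hd⟩
    by_cases he : θ ≤ -(Real.pi / 2)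
    · rw [← Real.cos_neg θ, max_eq_left
        (Real.cos_nonpos_of_pi_div_two_le_of_le (by linarith) (by linarith)), zero_mul]
    · push Not at he
      rw [← Real.cos_neg (θ - α), max_eq_left (a := (0 : ℝ)) (b := Real.cos (-(θ - α)))
        (Real.cos_nonpos_of_pi_div_two_le_of_le (by linarith) (by linarith)), mul_zero]

lemma angular_integral {α : ℝ} (h0 : 0 ≤ α) (h1 : α ≤ Real.pi) :
    ∫ θ in Set.Ioo (-Real.pi) Real.pi, max 0 (Real.cos θ) * max 0 (Real.cos (θ - α)) =
      (Real.sin α + (Real.pi - α) * Real.cos α) / 2 := by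
  have hpi := Real.pi_pos
  rw [setIntegral_congr_fun measurableSet_Ioo fun θ hθ => angular_indicator h0 h1 hθ,
    setIntegral_indicator measurableSet_Ioc,
    Set.inter_eq_self_of_subset_right (s := Set.Ioo (-Real.pi) Real.pi)
      (fun x hx => ⟨by linarith [hx.1], by linarith [hx.2]⟩),
    ← intervalIntegral.integral_of_le (by linarith)]
  have hderiv : ∀ t : ℝ, HasDerivAt
      (fun t => (t * Real.cos α + Real.sin (2 * t - α) / 2) / 2)
      (Real.cos t * Real.cos (t - α)) t := by
    intro t
    have h2 : HasDerivAt (fun t : ℝ => 2 * t - α) 2 t := by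
      simpa using ((hasDerivAt_id t).const_mul 2).sub_const α
    have h3 := (((hasDerivAt_id t).mul_const (Real.cos α)).add (h2.sin.div_const 2)).div_const 2
    refine h3.congr_deriv ?_
    have e1 : Real.cos (2 * t - α) = Real.cos t * Real.cos (t - α)
        - Real.sin t * Real.sin (t - α) := by
      rw [← Real.cos_add]; ring_nf
    have e2 : Real.cos α = Real.cos t * Real.cos (t - α) + Real.sin t * Real.sin (t - α) := by
      rw [← Real.cos_sub]; ring_nf
    rw [e1, e2]
    ring
  rw [intervalIntegral.integral_eq_sub_of_hasDerivAt (fun t _ => hderiv t)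
    (by apply Continuous.intervalIntegrable; fun_prop)]
  have e3 : Real.sin (2 * (Real.pi / 2) - α) = Real.sin α := by
    rw [← Real.sin_pi_sub α]; ring_nf
  have e4 : Real.sin (2 * (α - Real.pi / 2) - α) = -Real.sin α := by
    rw [← Real.sin_sub_pi α]; ring_nf
  rw [e3, e4]
  ring

lemma integral_gaussianReal_prod (f : ℝ × ℝ → ℝ) :
    ∫ p, f p ∂((gaussianReal 0 1).prod (gaussianReal 0 1)) =
      ∫ p : ℝ × ℝ, (2 * Real.pi)⁻¹ * Real.exp (-(p.1 ^ 2 + p.2 ^ 2) / 2) * f p := by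
  rw [gaussianReal_of_var_ne_zero 0 one_ne_zero,
    prod_withDensity (measurable_gaussianPDF 0 1) (measurable_gaussianPDF 0 1),
    integral_withDensity_eq_integral_toReal_smul
      (show Measurable fun z : ℝ × ℝ => gaussianPDF 0 1 z.1 * gaussianPDF 0 1 z.2 from
        ((measurable_gaussianPDF 0 1).comp measurable_fst).mul
          ((measurable_gaussianPDF 0 1).comp measurable_snd))
      (Filter.Eventually.of_forall fun p =>
        ENNReal.mul_lt_top gaussianPDF_lt_top gaussianPDF_lt_top)]
  refine integral_congr_ae (Filter.Eventually.of_forall fun p => ?_)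
  have hs : (√(2 * Real.pi))⁻¹ * (√(2 * Real.pi))⁻¹ = (2 * Real.pi)⁻¹ := by
    rw [← mul_inv, Real.mul_self_sqrt (by positivity)]
  simp only [ENNReal.toReal_mul, toReal_gaussianPDF, gaussianPDFReal, NNReal.coe_one, sub_zero,
    mul_one, smul_eq_mul]
  rw [mul_mul_mul_comm, hs, ← Real.exp_add]
  ring_nf

/-- Gaussian expectation of the product of ReLUs of correlated standard Gaussians:
∫ max(0,x)·max(0,ρx+√(1−ρ²)y) dγ(x)dγ(y) = Ψ(ρ)/2. -/
theorem gaussian_relu_correlation (Ψ : ℝ → ℝ)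
    (hΨ : ∀ t, Ψ t = (Real.sqrt (1 - t ^ 2) + (Real.pi - Real.arccos t) * t) / Real.pi)
    (ρ : ℝ) (hρ : ρ ∈ Set.Icc (-1 : ℝ) 1) :
    ∫ p : ℝ × ℝ, max 0 p.1 * max 0 (ρ * p.1 + Real.sqrt (1 - ρ ^ 2) * p.2)
        ∂((gaussianReal 0 1).prod (gaussianReal 0 1))
      = Ψ ρ / 2 := by
  have hcos : Real.cos (Real.arccos ρ) = ρ := Real.cos_arccos hρ.1 hρ.2
  have hang := angular_integral (Real.arccos_nonneg ρ) (Real.arccos_le_pi ρ)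
  rw [hcos, Real.sin_arccos] at hang
  rw [integral_gaussianReal_prod, ← integral_comp_polarCoord_symm, polarCoord_target]
  have hsplit : ∀ p ∈ Set.Ioi (0 : ℝ) ×ˢ Set.Ioo (-Real.pi) Real.pi,
      p.1 • ((2 * Real.pi)⁻¹ * Real.exp (-((polarCoord.symm p).1 ^ 2
          + (polarCoord.symm p).2 ^ 2) / 2) * (max 0 (polarCoord.symm p).1 *
          max 0 (ρ * (polarCoord.symm p).1 + √(1 - ρ ^ 2) * (polarCoord.symm p).2))) =
        (2 * Real.pi)⁻¹ * ((p.1 ^ 3 * Real.exp (-p.1 ^ 2 / 2)) *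
          (max 0 (Real.cos p.2) * max 0 (Real.cos (p.2 - Real.arccos ρ)))) := by
    rintro ⟨r, θ⟩ ⟨hr, -⟩
    have hr : 0 < r := hr
    simp only [polarCoord_symm_apply, smul_eq_mul]
    have e1 : (r * Real.cos θ) ^ 2 + (r * Real.sin θ) ^ 2 = r ^ 2 := by
      linear_combination r ^ 2 * Real.sin_sq_add_cos_sq θ
    have e2 : ρ * (r * Real.cos θ) + √(1 - ρ ^ 2) * (r * Real.sin θ)
        = r * Real.cos (θ - Real.arccos ρ) := by
      rw [Real.cos_sub, hcos, Real.sin_arccos]; ring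
    have e3 : ∀ x : ℝ, max 0 (r * x) = r * max 0 x := fun x => by
      rw [mul_max_of_nonneg _ _ hr.le, mul_zero]
    rw [e1, e2, e3, e3]
    ring
  rw [setIntegral_congr_fun (measurableSet_Ioi.prod measurableSet_Ioo) hsplit,
    integral_const_mul, Measure.volume_eq_prod,
    setIntegral_prod_mul (fun r : ℝ => r ^ 3 * Real.exp (-r ^ 2 / 2))
      (fun θ : ℝ => max 0 (Real.cos θ) * max 0 (Real.cos (θ - Real.arccos ρ))),
    radial_integral, hang, hΨ]
  have := Real.pi_pos
  field_simp
end

section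
/- For all real numbers K₀ > 0, σ > 0, a ≥ 0, and κ > 0, one has 2·∫_{0}^{a/κ} exp(−φ²/(2K₀))/√(2π·K₀) dφ + 2·∫_{a/κ}^{∞} exp(−(κ·φ − a)²/(2σ²) − φ²/(2K₀))/√(2π·K₀) dφ ≤ (√(2/π)·a + σ)/(κ·√K₀). -/
open MeasureTheory

/-!
Bounding the first integrand by its value `1 / √(2πK₀)` at `0` gives the term in `a`. In the second
integral, dropping the factor `exp (-φ² / (2K₀)) ≤ 1` leaves half of a Gaussian centred at `a / κ`
with variance `σ² / κ²`, whose mass is known exactly and gives the term in `σ`.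
-/

lemma half_gaussian_shift (b c : ℝ) :
    ∫ x in Set.Ici c, Real.exp (-b * (x - c) ^ 2) = Real.sqrt (Real.pi / b) / 2 := by
  have h := (measurePreserving_sub_right (volume : Measure ℝ) c).setIntegral_preimage_emb
    (measurableEmbedding_subRight c) (fun x => Real.exp (-b * x ^ 2)) (Set.Ici 0)
  have hs : (fun x : ℝ => x - c) ⁻¹' Set.Ici 0 = Set.Ici c := by
    ext x; simp
  rw [hs] at h
  rw [h, integral_Ici_eq_integral_Ioi, integral_gaussian_Ioi]

/-- Gaussian integral estimate used in the proof of the robustness guarantee. -/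
theorem gaussian_integral_estimate (K₀ σ a κ : ℝ)
    (hK₀ : 0 < K₀) (hσ : 0 < σ) (ha : 0 ≤ a) (hκ : 0 < κ) :
    2 * (∫ φ in Set.Icc (0 : ℝ) (a / κ),
          Real.exp (-φ ^ 2 / (2 * K₀)) / Real.sqrt (2 * Real.pi * K₀)) +
    2 * (∫ φ in Set.Ici (a / κ),
          Real.exp (-(κ * φ - a) ^ 2 / (2 * σ ^ 2) - φ ^ 2 / (2 * K₀)) /
            Real.sqrt (2 * Real.pi * K₀))
      ≤ (Real.sqrt (2 / Real.pi) * a + σ) / (κ * Real.sqrt K₀) := by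
  have hπ := Real.pi_pos
  have h1 : (∫ φ in Set.Icc (0 : ℝ) (a / κ),
      Real.exp (-φ ^ 2 / (2 * K₀)) / Real.sqrt (2 * Real.pi * K₀))
      ≤ a / κ * (1 / Real.sqrt (2 * Real.pi * K₀)) := by
    have hle : (∫ φ in Set.Icc (0 : ℝ) (a / κ),
        Real.exp (-φ ^ 2 / (2 * K₀)) / Real.sqrt (2 * Real.pi * K₀))
        ≤ ∫ _ in Set.Icc (0 : ℝ) (a / κ), 1 / Real.sqrt (2 * Real.pi * K₀) := by
      refine setIntegral_mono (Continuous.integrableOn_Icc (by fun_prop))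
        (Continuous.integrableOn_Icc (by fun_prop)) fun φ => ?_
      have : Real.exp (-φ ^ 2 / (2 * K₀)) ≤ 1 :=
        Real.exp_le_one_iff.2 (div_nonpos_of_nonpos_of_nonneg (by nlinarith) (by positivity))
      dsimp only
      gcongr
    have h0 : 0 ≤ a / κ := by positivity
    simpa [h0] using hle
  set b : ℝ := κ ^ 2 / (2 * σ ^ 2) with hb
  have hb0 : 0 < b := by positivity
  have hint : Integrable (fun φ : ℝ => Real.exp (-b * (φ - a / κ) ^ 2)) :=
    (integrable_exp_neg_mul_sq hb0).comp_sub_right (a / κ)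
  have h2 : (∫ φ in Set.Ici (a / κ),
      Real.exp (-(κ * φ - a) ^ 2 / (2 * σ ^ 2) - φ ^ 2 / (2 * K₀)) /
        Real.sqrt (2 * Real.pi * K₀))
      ≤ Real.sqrt (Real.pi / b) / 2 / Real.sqrt (2 * Real.pi * K₀) := by
    rw [← half_gaussian_shift b (a / κ), ← integral_div]
    refine integral_mono_of_nonneg (Filter.Eventually.of_forall fun φ => by positivity)
      (hint.integrableOn.div_const _) (Filter.Eventually.of_forall fun φ => ?_)
    have he : -b * (φ - a / κ) ^ 2 = -(κ * φ - a) ^ 2 / (2 * σ ^ 2) := by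
      rw [hb]; field_simp
    have : 0 ≤ φ ^ 2 / (2 * K₀) := by positivity
    dsimp only
    rw [he]
    gcongr
    linarith
  have hs1 : Real.sqrt (2 * Real.pi * K₀) = Real.sqrt 2 * Real.sqrt Real.pi * Real.sqrt K₀ := by
    rw [Real.sqrt_mul (by positivity), Real.sqrt_mul (by positivity)]
  have hs2 : Real.sqrt (Real.pi / b) = Real.sqrt 2 * Real.sqrt Real.pi * (σ / κ) := by
    have : Real.pi / b = 2 * Real.pi * (σ / κ) ^ 2 := by
      rw [hb]; field_simp
    rw [this, Real.sqrt_mul (by positivity), Real.sqrt_mul (by positivity),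
      Real.sqrt_sq (by positivity)]
  have hs3 : Real.sqrt (2 / Real.pi) = Real.sqrt 2 / Real.sqrt Real.pi :=
    Real.sqrt_div (by positivity) _
  have h22 : Real.sqrt 2 ^ 2 = 2 := Real.sq_sqrt (by norm_num)
  have p1 : 0 < Real.sqrt Real.pi := by positivity
  have p2 : 0 < Real.sqrt 2 := by positivity
  have p3 : 0 < Real.sqrt K₀ := by positivity
  rw [hs1] at h1 h2 ⊢
  rw [hs2] at h2
  rw [hs3]
  have hfin : (Real.sqrt 2 / Real.sqrt Real.pi * a + σ) / (κ * Real.sqrt K₀) =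
      2 * (a / κ * (1 / (Real.sqrt 2 * Real.sqrt Real.pi * Real.sqrt K₀))) +
      2 * (Real.sqrt 2 * Real.sqrt Real.pi * (σ / κ) / 2 /
        (Real.sqrt 2 * Real.sqrt Real.pi * Real.sqrt K₀)) := by
    field_simp
    linear_combination a * h22
  rw [hfin]
  linarith
end
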